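/- If A_2(8, 4, 4) ≥ 4801, then A_2(13, 4, 4) ≥ 157337054 = 4801·2^{15} + 1 + 17885. -/

import Mathlib

open Module

/-- The subspace distance `d_S(U, W) = dim(U + W) − dim(U ∩ W)`. -/
noncomputable def subspaceDist {F : Type*} [Field F] {n : ℕ}
    (U W : Submodule F (Fin n → F)) : ℕ :=
  finrank F ↥(U ⊔ W) - finrank F ↥(U ⊓ W)

/-- `A_q(n, d, k)`: the maximum size of an `(n, M, d, k)_q` constant dimension code, i.e.
of a set of `k`-dimensional subspaces of `F_q^n` with pairwise subspace distance
at least `d`. -/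
noncomputable def maxCDCSize (F : Type*) [Field F] [Fintype F] (n d k : ℕ) : ℕ :=
  sSup {M | ∃ C : Finset (Submodule F (Fin n → F)), C.card = M ∧
    (∀ U ∈ C, finrank F ↥U = k) ∧
    ∀ U ∈ C, ∀ W ∈ C, U ≠ W → d ≤ subspaceDist U W}

/-!
Inside `V × W` with `dim V = n` and `dim W = w`, two families of `k`-dimensional subspaces are
combined. The first lifts a code in `V` by a rank metric code: its members are the graphs, over the
`k`-dimensional members of the code, of linear maps to `W`. The members of the second contain a
fixed `δ`-dimensional subspace `Y` of `W` and project onto the `(k - δ)`-dimensional members of a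
code in `V`; a rank metric code into a complement of `Y` determines how they lie over their
projections. Members of different families meet in dimension at most `k - δ`: those of the first
meet `W` trivially, so that the intersection embeds into the projection of the second.

For `n = 8`, `w = 5`, `k = 4` and `δ = 2`, the first family contributes `A_q(8, 4, 4) * q ^ 15`
subspaces. The projections in the second may be taken to be the `1 + q² + q⁴ + q⁶` members of a
Desarguesian line spread, with `q ^ 8` subspaces over each. For `q = 2` this gives
`4801 * 2 ^ 15 + 85 * 2 ^ 8 = 157340928`.
-/

section FiniteDimensional

variable {F X Y Z : Type*} [Field F] [AddCommGroup X] [Module F X] [FiniteDimensional F X]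
  [AddCommGroup Y] [Module F Y] [AddCommGroup Z] [Module F Z]

theorem finrank_comap_le (f : X →ₗ[F] Y) (S : Submodule F Y) :
    finrank F (S.comap f) ≤ finrank F ↥(LinearMap.range f ⊓ S) + finrank F (LinearMap.ker f) := by
  have hrange : LinearMap.range (f.domRestrict (S.comap f)) = LinearMap.range f ⊓ S := by
    rw [LinearMap.range_domRestrict, Submodule.map_comap_eq]
  have hker : finrank F (LinearMap.ker (f.domRestrict (S.comap f))) ≤
      finrank F (LinearMap.ker f) := by
    rw [LinearMap.ker_domRestrict, ← Submodule.finrank_map_subtype_eq]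
    exact Submodule.finrank_mono (Submodule.map_comap_le _ _)
  have := (f.domRestrict (S.comap f)).finrank_range_add_finrank_ker
  rw [hrange] at this
  omega

theorem finrank_range_prod_inf_range_prod_le {X' : Type*} [AddCommGroup X'] [Module F X']
    (s : X →ₗ[F] Y) (f : X →ₗ[F] Z) (s' : X' →ₗ[F] Y) (f' : X' →ₗ[F] Z) :
    finrank F ↥(LinearMap.range (s.prod f) ⊓ LinearMap.range (s'.prod f')) ≤
      finrank F ↥(LinearMap.range s ⊓ LinearMap.range s') + finrank F (LinearMap.ker s) := by
  rw [← Submodule.map_comap_eq]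
  refine (Submodule.finrank_map_le _ _).trans
    ((Submodule.finrank_mono ?_).trans (finrank_comap_le s (LinearMap.range s')))
  rintro x ⟨x', hx'⟩
  exact ⟨x', congrArg Prod.fst hx'⟩

theorem exists_injective_range_eq {U : Submodule F Y} (hU : finrank F U = finrank F X)
    [FiniteDimensional F U] :
    ∃ s : X →ₗ[F] Y, Function.Injective s ∧ LinearMap.range s = U := by
  let e : X ≃ₗ[F] U := LinearEquiv.ofFinrankEq _ _ hU.symm
  refine ⟨U.subtype ∘ₗ e.toLinearMap, U.injective_subtype.comp e.injective, ?_⟩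
  rw [LinearEquiv.range_comp, Submodule.range_subtype]

end FiniteDimensional

section ConstDimCode

variable {F V : Type*} [Field F] [AddCommGroup V] [Module F V]

/-- An indexed constant dimension code: `k`-dimensional subspaces with pairwise subspace distance
at least `2 * δ`. Distances between `k`-dimensional subspaces are even, and `2 * δ` amounts to
intersections of dimension at most `k - δ`, written here without subtraction. -/
structure IsConstDimCode {ι : Type*} (δ k : ℕ) (U : ι → Submodule F V) : Prop where
  finrank_eq : ∀ i, finrank F (U i) = k
  finrank_inf_add_le : ∀ ⦃i j⦄, i ≠ j → finrank F ↥(U i ⊓ U j) + δ ≤ k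

theorem subspaceDist_add_two_mul_finrank_inf {n : ℕ} (U W : Submodule F (Fin n → F)) :
    subspaceDist U W + 2 * finrank F ↥(U ⊓ W) = finrank F U + finrank F W := by
  have hdim := Submodule.finrank_sup_add_finrank_inf_eq U W
  have hle : finrank F ↥(U ⊓ W) ≤ finrank F ↥(U ⊔ W) :=
    Submodule.finrank_mono (inf_le_left.trans le_sup_left)
  unfold subspaceDist
  omega

namespace IsConstDimCode

variable {ι κ : Type*} {δ k : ℕ} {U : ι → Submodule F V}

theorem injective (hU : IsConstDimCode δ k U) (hδ : 0 < δ) : Function.Injective U := by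
  intro i j hij
  by_contra hne
  have hle := hU.finrank_inf_add_le hne
  rw [hij, inf_idem, hU.finrank_eq] at hle
  omega

theorem map_equiv {V' : Type*} [AddCommGroup V'] [Module F V'] (hU : IsConstDimCode δ k U)
    (e : V ≃ₗ[F] V') : IsConstDimCode δ k fun i => (U i).map e.toLinearMap where
  finrank_eq i := (e.finrank_map_eq (U i)).trans (hU.finrank_eq i)
  finrank_inf_add_le i j hij := by
    rw [← Submodule.map_inf _ e.injective, e.finrank_map_eq]
    exact hU.finrank_inf_add_le hij

theorem sumElim {U' : κ → Submodule F V} (hU : IsConstDimCode δ k U) (hU' : IsConstDimCode δ k U')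
    (hUU' : ∀ i j, finrank F ↥(U i ⊓ U' j) + δ ≤ k) :
    IsConstDimCode δ k (Sum.elim U U') where
  finrank_eq := Sum.rec hU.finrank_eq hU'.finrank_eq
  finrank_inf_add_le := by
    rintro (i | i) (j | j) hij
    · exact hU.finrank_inf_add_le (ne_of_apply_ne Sum.inl hij)
    · exact hUU' i j
    · exact inf_comm (U j) (U' i) ▸ hUU' j i
    · exact hU'.finrank_inf_add_le (ne_of_apply_ne Sum.inr hij)

end IsConstDimCode

theorem bddAbove_cdc_card [Finite F] (n d k : ℕ) :
    BddAbove {M | ∃ C : Finset (Submodule F (Fin n → F)), C.card = M ∧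
      (∀ U ∈ C, finrank F ↥U = k) ∧
      ∀ U ∈ C, ∀ W ∈ C, U ≠ W → d ≤ subspaceDist U W} := by
  have := Fintype.ofFinite (Submodule F (Fin n → F))
  refine ⟨Fintype.card (Submodule F (Fin n → F)), ?_⟩
  rintro _ ⟨C, rfl, -⟩
  exact Finset.card_le_univ C

variable [Fintype F]

theorem exists_isConstDimCode_maxCDCSize (n δ k : ℕ) :
    ∃ U : Fin (maxCDCSize F n (2 * δ) k) → Submodule F (Fin n → F), IsConstDimCode δ k U := by
  obtain ⟨C, hcard, hdim, hdist⟩ :=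
    Nat.sSup_mem (by exact ⟨0, ∅, by simp⟩) (bddAbove_cdc_card (F := F) n (2 * δ) k)
  let e : Fin (maxCDCSize F n (2 * δ) k) ≃ C := (C.equivFinOfCardEq hcard).symm
  refine ⟨fun i => e i, fun i => hdim _ (e i).2, fun i j hij => ?_⟩
  have hsum := subspaceDist_add_two_mul_finrank_inf (e i).1 (e j).1
  have hle := hdist _ (e i).2 _ (e j).2 (Subtype.coe_ne_coe.mpr (e.injective.ne hij))
  rw [hdim _ (e i).2, hdim _ (e j).2] at hsum
  omega

theorem IsConstDimCode.natCard_le_maxCDCSize [FiniteDimensional F V] {ι : Type*} {δ k : ℕ}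
    {U : ι → Submodule F V} (hU : IsConstDimCode δ k U) (hδ : 0 < δ) :
    Nat.card ι ≤ maxCDCSize F (finrank F V) (2 * δ) k := by
  classical
  let e : V ≃ₗ[F] (Fin (finrank F V) → F) := (finBasis F V).equivFun
  let U' (i : ι) : Submodule F (Fin (finrank F V) → F) := (U i).map e.toLinearMap
  have hU' : IsConstDimCode δ k U' := hU.map_equiv e
  have hinj : Function.Injective U' := hU'.injective hδ
  have : Fintype ι := @Fintype.ofFinite ι (Finite.of_injective U' hinj)
  refine le_csSup (bddAbove_cdc_card _ _ _) ⟨Finset.univ.image U', ?_, ?_, ?_⟩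
  · rw [Finset.card_image_of_injective _ hinj, Finset.card_univ, Nat.card_eq_fintype_card]
  · simpa using hU'.finrank_eq
  · simp only [Finset.mem_image, Finset.mem_univ, true_and]
    rintro _ ⟨i, rfl⟩ _ ⟨j, rfl⟩ hne
    have hinf := hU'.finrank_inf_add_le (ne_of_apply_ne U' hne)
    have hsum := subspaceDist_add_two_mul_finrank_inf (U' i) (U' j)
    rw [hU'.finrank_eq, hU'.finrank_eq] at hsum
    omega

theorem exists_isConstDimCode_range {X : Type*} [AddCommGroup X] [Module F X]
    [FiniteDimensional F X] {k : ℕ} (hX : finrank F X = k) (n δ : ℕ) :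
    ∃ s : Fin (maxCDCSize F n (2 * δ) k) → X →ₗ[F] (Fin n → F),
      (∀ i, Function.Injective (s i)) ∧ IsConstDimCode δ k fun i => LinearMap.range (s i) := by
  obtain ⟨U, hU⟩ := exists_isConstDimCode_maxCDCSize (F := F) n δ k
  choose s hs hrange using fun i =>
    exists_injective_range_eq (X := X) ((hU.finrank_eq i).trans hX.symm)
  exact ⟨s, hs, by simpa only [hrange] using hU⟩

end ConstDimCode

section FieldExtension

theorem exists_finite_extension_finrank_eq (F : Type*) [Field F] [Finite F] {m : ℕ} (hm : m ≠ 0) :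
    ∃ (K : Type) (_ : Field K) (_ : Algebra F K) (_ : Finite K), finrank F K = m := by
  have : Fact (ringChar F).Prime := ⟨CharP.char_is_prime F _⟩
  have : NeZero m := ⟨hm⟩
  exact ⟨FiniteField.Extension F (ringChar F) m, inferInstance, inferInstance, inferInstance,
    FiniteField.finrank_extension F (ringChar F) m⟩

open scoped LinearAlgebra.Projectivization

/-- The Desarguesian spread: the points of a projective space over an extension field. -/
theorem isConstDimCode_projectivization (F K V : Type*) [Field F] [Field K] [Algebra F K]
    [AddCommGroup V] [Module F V] [Module K V] [IsScalarTower F K V] :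
    IsConstDimCode (finrank F K) (finrank F K)
      fun P : ℙ K V => P.submodule.restrictScalars F where
  finrank_eq P := by
    change finrank F P.submodule = _
    rw [← finrank_mul_finrank F K, P.finrank_submodule, mul_one]
  finrank_inf_add_le P Q hPQ := by
    have hatom (P : ℙ K V) : IsAtom P.submodule :=
      Submodule.isAtom_iff_finrank_eq_one.mpr P.finrank_submodule
    have hdisj : P.submodule ⊓ Q.submodule = ⊥ :=
      ((hatom P).disjoint_of_ne (hatom Q) (Projectivization.submodule_injective.ne hPQ)).eq_bot
    change finrank F ↥((P.submodule ⊓ Q.submodule).restrictScalars F) + _ ≤ _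
    rw [hdisj, Submodule.restrictScalars_bot, finrank_bot, zero_add]

theorem sum_card_pow_le_maxCDCSize (F : Type*) [Field F] [Fintype F] {a : ℕ} (ha : 0 < a) (t : ℕ) :
    ∑ i ∈ Finset.range t, (Fintype.card F ^ a) ^ i ≤ maxCDCSize F (a * t) (2 * a) a := by
  obtain ⟨K, _, _, _, hK⟩ := exists_finite_extension_finrank_eq F ha.ne'
  have hspread := (isConstDimCode_projectivization F K (Fin t → K)).natCard_le_maxCDCSize
    (hK.symm ▸ ha)
  have hV : finrank F (Fin t → K) = a * t := by
    rw [← finrank_mul_finrank F K, hK, finrank_fin_fun]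
  rwa [Projectivization.card_of_finrank K _ (finrank_fin_fun K),
    natCard_eq_pow_finrank (K := F), Nat.card_eq_fintype_card, hV, hK] at hspread

end FieldExtension

section Linearized

open Polynomial

variable (F : Type*) {K : Type*} [Field F] [Fintype F] [Field K] {k : ℕ}

/-- The linearized polynomial `∑ i, a i * X ^ q ^ i` over an extension `K` of the field `F` of
order `q`. -/
noncomputable def linearizedPolynomial (a : Fin k → K) : K[X] :=
  ∑ i, C (a i) * X ^ Fintype.card F ^ (i : ℕ)

theorem coeff_linearizedPolynomial (a : Fin k → K) (j : Fin k) :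
    (linearizedPolynomial F a).coeff (Fintype.card F ^ (j : ℕ)) = a j := by
  simp [linearizedPolynomial, coeff_X_pow,
    (Nat.pow_right_injective (Fintype.one_lt_card (α := F))).eq_iff, Fin.val_inj]

theorem linearizedPolynomial_ne_zero {a : Fin k → K} (ha : a ≠ 0) :
    linearizedPolynomial F a ≠ 0 := by
  intro hzero
  refine ha (funext fun j => ?_)
  rw [← coeff_linearizedPolynomial F a j, hzero, coeff_zero, Pi.zero_apply]

theorem degree_linearizedPolynomial_lt (a : Fin k → K) :
    (linearizedPolynomial F a).degree < ↑(Fintype.card F ^ k) := by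
  rw [← mem_degreeLT]
  refine Submodule.sum_mem _ fun i _ => mem_degreeLT.mpr ((degree_C_mul_X_pow_le _ _).trans_lt ?_)
  exact_mod_cast Nat.pow_lt_pow_right (Fintype.one_lt_card (α := F)) i.2

variable [Algebra F K]

/-- The `F`-linear map `x ↦ ∑ i, a i * x ^ q ^ i` given by evaluating a linearized polynomial. -/
noncomputable def linearizedMap : (Fin k → K) →ₗ[K] K →ₗ[F] K :=
  Fintype.linearCombination K fun i =>
    (FiniteField.frobeniusAlgHom F K ^ (i : ℕ)).toLinearMap

theorem linearizedMap_apply (a : Fin k → K) (x : K) :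
    linearizedMap F a x = (linearizedPolynomial F a).eval x := by
  simp [linearizedMap, linearizedPolynomial, Fintype.linearCombination_apply, eval_finsetSum,
    FiniteField.coe_frobeniusAlgHom, pow_iterate]

theorem finrank_ker_linearizedMap_lt [Finite K] {a : Fin k → K} (ha : a ≠ 0) :
    finrank F (LinearMap.ker (linearizedMap F a)) < k := by
  have hP := linearizedPolynomial_ne_zero F ha
  have hroots : (LinearMap.ker (linearizedMap F a) : Set K) ⊆
      (linearizedPolynomial F a).rootSet K := fun x hx => by
    rw [mem_rootSet, coe_aeval_eq_eval, ← linearizedMap_apply]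
    exact ⟨hP, hx⟩
  refine (Nat.pow_lt_pow_iff_right (Fintype.one_lt_card (α := F))).mp ?_
  calc Fintype.card F ^ finrank F (LinearMap.ker (linearizedMap F a))
      = Nat.card (LinearMap.ker (linearizedMap F a)) := by
        rw [natCard_eq_pow_finrank (K := F), Nat.card_eq_fintype_card]
    _ ≤ ((linearizedPolynomial F a).rootSet K).ncard := Set.ncard_le_ncard hroots
    _ ≤ (linearizedPolynomial F a).natDegree := ncard_rootSet_le _ _
    _ < Fintype.card F ^ k := (natDegree_lt_iff_degree_lt hP).mpr
        (degree_linearizedPolynomial_lt F a)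

end Linearized

section RankMetricCode

variable {F X Y X' Y' κ : Type*} [Field F] [AddCommGroup X] [Module F X] [AddCommGroup Y]
  [Module F Y] [AddCommGroup X'] [Module F X'] [AddCommGroup Y'] [Module F Y']

/-- An indexed rank metric code of minimum distance at least `δ`, with linear maps in place of
matrices. -/
def IsRankMetricCode (δ : ℕ) (f : κ → X →ₗ[F] Y) : Prop :=
  ∀ ⦃a b⦄, a ≠ b → δ ≤ finrank F (LinearMap.range (f a - f b))

namespace IsRankMetricCode

variable {δ : ℕ} {f : κ → X →ₗ[F] Y}

theorem comp_injective {κ' : Type*} (hf : IsRankMetricCode δ f) {e : κ' → κ}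
    (he : Function.Injective e) : IsRankMetricCode δ (f ∘ e) :=
  fun _ _ hab => hf (he.ne hab)

theorem prod_left [FiniteDimensional F X] (hf : IsRankMetricCode δ f) (h : X →ₗ[F] Y') :
    IsRankMetricCode δ fun a => h.prod (f a) := by
  intro a b hab
  have hrange : (LinearMap.range (h.prod (f a) - h.prod (f b))).map (LinearMap.snd F Y' Y) =
      LinearMap.range (f a - f b) := by
    rw [← LinearMap.range_comp, LinearMap.comp_sub, LinearMap.snd_prod, LinearMap.snd_prod]
  exact (hf hab).trans (hrange ▸ Submodule.finrank_map_le _ _)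

theorem arrowCongr (hf : IsRankMetricCode δ f) (e : X ≃ₗ[F] X') (e' : Y ≃ₗ[F] Y') :
    IsRankMetricCode δ fun a => e.arrowCongr e' (f a) := by
  intro a b hab
  have hsub : e.arrowCongr e' (f a) - e.arrowCongr e' (f b) =
      e'.toLinearMap ∘ₗ (f a - f b) ∘ₗ e.symm.toLinearMap := by
    ext
    simp
  rw [hsub, LinearMap.range_comp, LinearEquiv.range_comp, e'.finrank_map_eq]
  exact hf hab

theorem dualMap (hf : IsRankMetricCode δ f) :
    IsRankMetricCode δ fun a => (f a).dualMap := by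
  intro a b hab
  have hsub : (f a).dualMap - (f b).dualMap = (f a - f b).dualMap :=
    (map_sub Dual.transpose (f a) (f b)).symm
  rw [hsub, LinearMap.finrank_range_dualMap_eq_finrank_range]
  exact hf hab

theorem exists_transpose [FiniteDimensional F X] [FiniteDimensional F Y]
    (hf : IsRankMetricCode δ f) : ∃ g : κ → Y →ₗ[F] X, IsRankMetricCode δ g :=
  ⟨_, hf.dualMap.arrowCongr (LinearEquiv.ofFinrankEq _ _ Subspace.dual_finrank_eq)
    (LinearEquiv.ofFinrankEq _ _ Subspace.dual_finrank_eq)⟩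

end IsRankMetricCode

/-- The number `q ^ (max m n * (min m n - δ + 1))` of codewords of a maximum rank distance code of
`m × n` matrices over the field of order `q`, for `0 < δ`. When `min m n < δ`, truncated subtraction
makes it `1`, which is the right value. -/
def mrdCard (q m n δ : ℕ) : ℕ := q ^ (max m n * (min m n + 1 - δ))

theorem mrdCard_comm (q m n δ : ℕ) : mrdCard q m n δ = mrdCard q n m δ := by
  rw [mrdCard, mrdCard, max_comm, min_comm]

variable [Fintype F] [FiniteDimensional F X]

/-- The Gabidulin code: linearized maps with `dim X - δ + 1` coefficients, restricted to `X`. -/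
theorem isRankMetricCode_linearizedMap {K : Type*} [Field K] [Finite K] [Algebra F K]
    {s : X →ₗ[F] K} (hs : Function.Injective s) (δ : ℕ) :
    IsRankMetricCode δ fun a : Fin (finrank F X + 1 - δ) → K => linearizedMap F a ∘ₗ s := by
  intro a b hab
  beta_reduce
  have hlin := finrank_ker_linearizedMap_lt F (sub_ne_zero.mpr hab)
  have hcomap := finrank_comap_le s (LinearMap.ker (linearizedMap F (a - b)))
  have hinf := Submodule.finrank_mono
    (inf_le_right (a := LinearMap.range s) (b := LinearMap.ker (linearizedMap F (a - b))))
  rw [LinearMap.ker_eq_bot.mpr hs, finrank_bot, ← LinearMap.ker_comp, map_sub,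
    LinearMap.sub_comp] at hcomap
  have := (linearizedMap F a ∘ₗ s - linearizedMap F b ∘ₗ s).finrank_range_add_finrank_ker
  rw [map_sub] at hinf hlin
  omega

variable [FiniteDimensional F Y]

theorem exists_isRankMetricCode_of_finrank_le (hXY : finrank F X ≤ finrank F Y) (δ : ℕ) :
    ∃ f : Fin (mrdCard (Fintype.card F) (finrank F X) (finrank F Y) δ) → X →ₗ[F] Y,
      IsRankMetricCode δ f := by
  rcases eq_or_ne (finrank F Y) 0 with hY | hY
  · have : Subsingleton (Fin (mrdCard (Fintype.card F) (finrank F X) (finrank F Y) δ)) := by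
      simpa [mrdCard, hY, Nat.le_zero.mp (hY ▸ hXY)] using Fin.subsingleton_one
    exact ⟨0, fun a b hab => (hab (Subsingleton.elim a b)).elim⟩
  obtain ⟨K, _, _, _, hK⟩ := exists_finite_extension_finrank_eq F hY
  have : FiniteDimensional F K := .of_finite
  obtain ⟨s, hs⟩ : ∃ s : X →ₗ[F] K, Function.Injective s :=
    finrank_le_iff_exists_linearMap.mp (hXY.trans hK.ge)
  have hcard : Nat.card (Fin (finrank F X + 1 - δ) → K) =
      mrdCard (Fintype.card F) (finrank F X) (finrank F Y) δ := by
    rw [Nat.card_fun, natCard_eq_pow_finrank (K := F), hK, Nat.card_eq_fintype_card,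
      Nat.card_fin, ← pow_mul, mrdCard, max_eq_right hXY, min_eq_left hXY]
  have hcode := (isRankMetricCode_linearizedMap hs δ).arrowCongr (LinearEquiv.refl F X)
    (LinearEquiv.ofFinrankEq K Y hK)
  exact ⟨_, hcode.comp_injective (Finite.equivFinOfCardEq hcard).symm.injective⟩

theorem exists_isRankMetricCode {m n : ℕ} (hX : finrank F X = m) (hY : finrank F Y = n) (δ : ℕ) :
    ∃ f : Fin (mrdCard (Fintype.card F) m n δ) → X →ₗ[F] Y, IsRankMetricCode δ f := by
  subst hX hY
  rcases le_total (finrank F X) (finrank F Y) with hXY | hYX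
  · exact exists_isRankMetricCode_of_finrank_le hXY δ
  · obtain ⟨f, hf⟩ := exists_isRankMetricCode_of_finrank_le hYX δ
    rw [mrdCard_comm]
    exact hf.exists_transpose

end RankMetricCode

section Linkage

variable {F V W X L : Type*} [Field F] [AddCommGroup V] [Module F V] [AddCommGroup W] [Module F W]
  [AddCommGroup X] [Module F X] [FiniteDimensional F X] [AddCommGroup L] [Module F L]

theorem finrank_range_prod_inf_range_prod_add_le {p : X →ₗ[F] L} {s : L →ₗ[F] V}
    (hs : Function.Injective s) {f g : X →ₗ[F] W}
    (hfg : ∀ x y, p x = p y → f x = g y → x = y) :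
    finrank F ↥(LinearMap.range ((s ∘ₗ p).prod f) ⊓ LinearMap.range ((s ∘ₗ p).prod g)) +
      finrank F (LinearMap.range (f - g)) ≤ finrank F X := by
  rw [← (f - g).finrank_range_add_finrank_ker, add_comm, add_le_add_iff_left]
  refine (Submodule.finrank_mono ?_).trans
    (Submodule.finrank_map_le ((s ∘ₗ p).prod f) (LinearMap.ker (f - g)))
  rintro _ ⟨⟨x, rfl⟩, y, hxy⟩
  have hf : f x = g y := (congrArg Prod.snd hxy).symm
  obtain rfl := hfg x y (hs (congrArg Prod.fst hxy).symm) hf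
  exact ⟨x, sub_eq_zero.mpr hf, rfl⟩

theorem isConstDimCode_range_prod {ι κ : Type*} {δ : ℕ} {p : X →ₗ[F] L}
    (hp : Function.Surjective p) {s : ι → L →ₗ[F] V} (hs : ∀ i, Function.Injective (s i))
    (hcode : IsConstDimCode δ (finrank F L) fun i => LinearMap.range (s i))
    {f : κ → X →ₗ[F] W} (hf : IsRankMetricCode δ f)
    (hpf : ∀ a b x y, p x = p y → f a x = f b y → x = y) :
    IsConstDimCode δ (finrank F X)
      fun c : ι × κ => LinearMap.range ((s c.1 ∘ₗ p).prod (f c.2)) where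
  finrank_eq c := LinearMap.finrank_range_of_inj fun x y hxy =>
    hpf c.2 c.2 x y (hs c.1 (congrArg Prod.fst hxy)) (congrArg Prod.snd hxy)
  finrank_inf_add_le := by
    rintro ⟨i, a⟩ ⟨j, b⟩ hne
    dsimp only
    rcases eq_or_ne i j with rfl | hij
    · have hle := finrank_range_prod_inf_range_prod_add_le (hs i) (hpf a b)
      have hrank := hf (ne_of_apply_ne (Prod.mk i) hne)
      omega
    · have hle := finrank_range_prod_inf_range_prod_le (s i ∘ₗ p) (f a) (s j ∘ₗ p) (f b)
      have hinf := hcode.finrank_inf_add_le hij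
      have hdim := p.finrank_range_add_finrank_ker
      rw [LinearMap.range_eq_top.mpr hp, finrank_top] at hdim
      rw [LinearMap.ker_comp_of_ker_eq_bot _ (LinearMap.ker_eq_bot.mpr (hs i)),
        LinearMap.range_comp_of_range_eq_top _ (LinearMap.range_eq_top.mpr hp),
        LinearMap.range_comp_of_range_eq_top _ (LinearMap.range_eq_top.mpr hp)] at hle
      omega

variable (F) [Fintype F]

theorem maxCDCSize_mul_mrdCard_add_le (n : ℕ) {k w δ : ℕ} (hδ : 0 < δ) (hk : δ ≤ k) (hw : δ ≤ w) :
    maxCDCSize F n (2 * δ) k * mrdCard (Fintype.card F) k w δ +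
      maxCDCSize F n (2 * δ) (k - δ) * mrdCard (Fintype.card F) k (w - δ) δ ≤
    maxCDCSize F (n + w) (2 * δ) k := by
  obtain ⟨j, rfl⟩ := Nat.exists_eq_add_of_le' hk
  obtain ⟨z, rfl⟩ := Nat.exists_eq_add_of_le hw
  rw [Nat.add_sub_cancel, Nat.add_sub_cancel_left]
  let L := Fin j → F
  let Y := Fin δ → F
  let Z := Fin z → F
  have hX : finrank F (L × Y) = j + δ := by simp [L, Y]
  have hL : finrank F L = j := finrank_fin_fun F
  obtain ⟨s, hs, hsC⟩ := exists_isConstDimCode_range hX n δ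
  obtain ⟨t, ht, htC⟩ := exists_isConstDimCode_range hL n δ
  obtain ⟨f, hf⟩ := exists_isRankMetricCode hX
    (show finrank F (Y × Z) = δ + z by simp [Y, Z]) δ
  obtain ⟨g, hg⟩ := exists_isRankMetricCode hX (show finrank F Z = z from finrank_fin_fun F) δ
  have hlift := isConstDimCode_range_prod (p := LinearMap.id) Function.surjective_id hs
    (hX.symm ▸ hsC) hf fun _ _ _ _ hxy _ => hxy
  have hext := isConstDimCode_range_prod (p := LinearMap.fst F L Y) LinearMap.fst_surjective ht
    (hL.symm ▸ htC) (hg.prod_left (LinearMap.snd F L Y)) fun _ _ _ _ hfst hsnd =>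
      Prod.ext hfst (congrArg Prod.fst hsnd)
  have hcode := hlift.sumElim hext fun c d => by
    have hle := finrank_range_prod_inf_range_prod_le (s c.1 ∘ₗ LinearMap.id) (f c.2)
      (t d.1 ∘ₗ LinearMap.fst F L Y) ((LinearMap.snd F L Y).prod (g d.2))
    have hinf := Submodule.finrank_mono (inf_le_right.trans
      (LinearMap.range_comp_le_range (LinearMap.fst F L Y) (t d.1)) :
        LinearMap.range (s c.1 ∘ₗ LinearMap.id) ⊓ LinearMap.range (t d.1 ∘ₗ LinearMap.fst F L Y) ≤
          LinearMap.range (t d.1))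
    rw [htC.finrank_eq] at hinf
    rw [LinearMap.comp_id, LinearMap.ker_eq_bot.mpr (hs c.1), finrank_bot] at hle
    rw [hX]
    exact Nat.add_le_add_right (hle.trans hinf) δ
  have hcard := hcode.natCard_le_maxCDCSize hδ
  simpa [hX, Nat.card_sum, L, Y, Z] using hcard

theorem A2_13_4_4_lower_bound_general :
    maxCDCSize F 8 4 4 * Fintype.card F ^ 15 +
      (∑ i ∈ Finset.range 4, (Fintype.card F ^ 2) ^ i) * Fintype.card F ^ 8 ≤
    maxCDCSize F 13 4 4 := by
  refine le_trans ?_ (maxCDCSize_mul_mrdCard_add_le F 8 (δ := 2) (k := 4) (w := 5) two_pos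
    (by norm_num) (by norm_num))
  gcongr
  · simp [mrdCard]
  · exact sum_card_pow_le_maxCDCSize F two_pos 4
  · simp [mrdCard]

end Linkage

/-- If `A_2(8, 4, 4) ≥ 4801`, then `A_2(13, 4, 4) ≥ 157337054 = 4801·2^{15} + 1 + 17885`. -/
theorem A2_13_4_4_lower_bound (h : 4801 ≤ maxCDCSize (ZMod 2) 8 4 4) :
    157337054 ≤ maxCDCSize (ZMod 2) 13 4 4 ∧
    (157337054 : ℕ) = 4801 * 2 ^ 15 + 1 + 17885 := by
  refine ⟨?_, by norm_num⟩
  calc 157337054 ≤ 4801 * 2 ^ 15 + (∑ i ∈ Finset.range 4, (2 ^ 2) ^ i) * 2 ^ 8 := by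
        norm_num [Finset.sum_range_succ]
    _ ≤ maxCDCSize (ZMod 2) 8 4 4 * 2 ^ 15 + (∑ i ∈ Finset.range 4, (2 ^ 2) ^ i) * 2 ^ 8 := by
        gcongr
    _ ≤ maxCDCSize (ZMod 2) 13 4 4 := by
        simpa only [ZMod.card] using A2_13_4_4_lower_bound_general (ZMod 2)
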